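/- s²·(s·(φ(s) − s) + 1) → −2 as s → ∞; in particular φ(s) = s − 1/s − 2/s³ + o(1/s³) as s → ∞. -/

import Mathlib

open Set Filter Asymptotics

/-!
A solution of `u' = A (g - u)` with `A > 0` and `∫ A = ∞` relaxes to the limit of `g`. Each of the
quantities `φ / s`, `w = s (φ - s)` and `s² (w + 1)` satisfies an equation of this shape, with `A`
close to `s` and a forcing term `g` whose limit is determined by the previous quantity in the list:
`φ / s → 1` gives `w → -1`, which gives `s² (w + 1) → -2`. Only the very first step needs a separate
argument, namely that `φ` is eventually at least `s / 3`: as long as it is smaller, `φ / s` grows at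
least like a multiple of `log s`.
-/

open scoped Topology

section Relaxation

variable {u u' ρ ρ' A g : ℝ → ℝ} {m m' L : ℝ}

lemma exists_ge_and_ge_of_deriv_ge (hu : ∀ᶠ s in atTop, HasDerivAt u (u' s) s)
    (hρ : ∀ᶠ s in atTop, HasDerivAt ρ (ρ' s) s) (hρ_top : Tendsto ρ atTop atTop)
    (h : ∀ᶠ s in atTop, u s ≤ m → ρ' s ≤ u' s) (N : ℝ) : ∃ T, N ≤ T ∧ m ≤ u T := by
  by_contra! hlt
  obtain ⟨R, hR⟩ := eventually_atTop.1 ((hu.and hρ).and (h.and (eventually_ge_atTop N)))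
  have hderiv : ∀ s, R ≤ s → HasDerivAt (fun s => u s - ρ s) (u' s - ρ' s) s :=
    fun s hs => (hR s hs).1.1.sub (hR s hs).1.2
  have hmono : MonotoneOn (fun s => u s - ρ s) (Ici R) :=
    monotoneOn_of_hasDerivWithinAt_nonneg (convex_Ici R)
      (fun s hs => (hderiv s hs).continuousAt.continuousWithinAt)
      (fun s hs => (hderiv s (interior_subset hs)).hasDerivWithinAt) fun s hs => by
        obtain ⟨hle, hN⟩ := (hR s (interior_subset hs)).2
        exact sub_nonneg.2 (hle (hlt s hN).le)
  obtain ⟨s, hρs, hRs⟩ :=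
    ((hρ_top.eventually_gt_atTop (m - (u R - ρ R))).and (eventually_ge_atTop R)).exists
  have hgrowth : u R - ρ R ≤ u s - ρ s := hmono self_mem_Ici hRs hRs
  linarith [hlt s (hR s hRs).2.2]

lemma eventually_ge_of_deriv_ge (hu : ∀ᶠ s in atTop, HasDerivAt u (u' s) s)
    (hρ : ∀ᶠ s in atTop, HasDerivAt ρ (ρ' s) s) (hρ_pos : ∀ᶠ s in atTop, 0 < ρ' s)
    (hρ_top : Tendsto ρ atTop atTop) (h : ∀ᶠ s in atTop, u s ≤ m → ρ' s ≤ u' s) :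
    ∀ᶠ s in atTop, m ≤ u s := by
  obtain ⟨N, hN⟩ := eventually_atTop.1 (hu.and (hρ_pos.and h))
  obtain ⟨T, hNT, hT⟩ := exists_ge_and_ge_of_deriv_ge hu hρ hρ_top h N
  filter_upwards [eventually_ge_atTop T] with s hs
  refine image_le_of_deriv_right_lt_deriv_boundary' (f := fun _ => m) (f' := fun _ => 0)
    continuousOn_const (fun x _ => hasDerivWithinAt_const x _ m) hT
    (fun x hx => (hN x (hNT.trans hx.1)).1.continuousAt.continuousWithinAt)
    (fun x hx => (hN x (hNT.trans hx.1)).1.hasDerivWithinAt) (fun x hx hmx => ?_)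
    (right_mem_Icc.2 hs)
  obtain ⟨-, hpos, hle⟩ := hN x (hNT.trans hx.1)
  exact hpos.trans_le (hle hmx.ge)

lemma eventually_ge_of_relaxation (hu : ∀ᶠ s in atTop, HasDerivAt u (A s * (g s - u s)) s)
    (hρ : ∀ᶠ s in atTop, HasDerivAt ρ (ρ' s) s) (hρ_pos : ∀ᶠ s in atTop, 0 < ρ' s)
    (hρ_top : Tendsto ρ atTop atTop) (hA : ∀ᶠ s in atTop, ρ' s ≤ A s)
    (hm : m' < m) (hg : ∀ᶠ s in atTop, m ≤ g s) : ∀ᶠ s in atTop, m' ≤ u s := by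
  have hgap : 0 < m - m' := sub_pos.2 hm
  refine eventually_ge_of_deriv_ge (ρ := fun s => ρ s * (m - m')) hu
    (hρ.mono fun s hs => hs.mul_const _) (hρ_pos.mono fun s hs => mul_pos hs hgap)
    (hρ_top.atTop_mul_const hgap) ?_
  filter_upwards [hρ_pos, hA, hg] with s hpos hAs hgs hus
  exact mul_le_mul hAs (by linarith) hgap.le (hpos.le.trans hAs)

theorem tendsto_of_relaxation (hu : ∀ᶠ s in atTop, HasDerivAt u (A s * (g s - u s)) s)
    (hρ : ∀ᶠ s in atTop, HasDerivAt ρ (ρ' s) s) (hρ_pos : ∀ᶠ s in atTop, 0 < ρ' s)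
    (hρ_top : Tendsto ρ atTop atTop) (hA : ∀ᶠ s in atTop, ρ' s ≤ A s)
    (hg : Tendsto g atTop (𝓝 L)) : Tendsto u atTop (𝓝 L) := by
  refine tendsto_order.2 ⟨fun m hm => ?_, fun m hm => ?_⟩
  · obtain ⟨m₂, hm₂, hL⟩ := exists_between hm
    obtain ⟨m₁, hm₁, hm₁₂⟩ := exists_between hm₂
    have hge := eventually_ge_of_relaxation hu hρ hρ_pos hρ_top hA hm₁₂ (hg.eventually_const_le hL)
    exact hge.mono fun s hs => hm₁.trans_le hs
  · obtain ⟨m₂, hL, hm₂⟩ := exists_between hm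
    obtain ⟨m₁, hm₁₂, hm₁⟩ := exists_between hm₂
    have hu_neg : ∀ᶠ s in atTop, HasDerivAt (fun s => -u s) (A s * (-g s - -u s)) s :=
      hu.mono fun s hs => hs.fun_neg.congr_deriv (by ring)
    have hge := eventually_ge_of_relaxation hu_neg hρ hρ_pos hρ_top hA (neg_lt_neg hm₁₂)
      ((hg.eventually_le_const hL).mono fun s hs => neg_le_neg hs)
    exact hge.mono fun s hs => (neg_le_neg_iff.1 hs).trans_lt hm₁

theorem tendsto_of_relaxation_of_inv_le
    (hu : ∀ᶠ s in atTop, HasDerivAt u (A s * (g s - u s)) s)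
    (hA : ∀ᶠ s in atTop, s⁻¹ ≤ A s) (hg : Tendsto g atTop (𝓝 L)) : Tendsto u atTop (𝓝 L) :=
  tendsto_of_relaxation hu
    ((eventually_ne_atTop 0).mono fun _ hs => Real.hasDerivAt_log hs)
    ((eventually_gt_atTop 0).mono fun _ hs => inv_pos.2 hs) Real.tendsto_log_atTop hA hg

end Relaxation

lemma tendsto_pow_mul_zero_of_lt {f : ℝ → ℝ} {c : ℝ} {k n : ℕ} (hkn : k < n)
    (hf : Tendsto (fun s => s ^ n * f s) atTop (𝓝 c)) :
    Tendsto (fun s => s ^ k * f s) atTop (𝓝 0) := by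
  have hpow : Tendsto (fun s : ℝ => (s ^ (n - k))⁻¹) atTop (𝓝 0) :=
    (tendsto_pow_atTop (Nat.sub_ne_zero_of_lt hkn)).inv_tendsto_atTop
  refine (by simpa using hpow.mul hf :
    Tendsto (fun s => (s ^ (n - k))⁻¹ * (s ^ n * f s)) atTop (𝓝 0)).congr' ?_
  filter_upwards [eventually_ne_atTop 0] with s hs
  rw [← Nat.sub_add_cancel hkn.le, pow_add, Nat.add_sub_cancel, mul_assoc,
    inv_mul_cancel_left₀ (pow_ne_zero _ hs)]

lemma tendsto_pow_mul_zero_of_abs_le_div_pow {f : ℝ → ℝ} {C : ℝ} {k n : ℕ} (hkn : k < n)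
    (hf : ∀ᶠ s in atTop, |f s| ≤ C / s ^ n) : Tendsto (fun s => s ^ k * f s) atTop (𝓝 0) := by
  refine squeeze_zero_norm' (a := fun s : ℝ => C * (s ^ k / s ^ n)) ?_
    (by simpa using (tendsto_pow_div_pow_atTop_zero hkn).const_mul C)
  filter_upwards [hf, eventually_gt_atTop 0] with s hfs hs
  calc ‖s ^ k * f s‖ = s ^ k * |f s| := by rw [norm_mul, Real.norm_of_nonneg (by positivity),
        Real.norm_eq_abs]
    _ ≤ s ^ k * (C / s ^ n) := by gcongr
    _ = C * (s ^ k / s ^ n) := by ring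

lemma eventually_inv_le_one_add_sq_div (φ : ℝ → ℝ) : ∀ᶠ s in atTop, s⁻¹ ≤ (1 + φ s ^ 2) / s := by
  filter_upwards [eventually_gt_atTop 0] with s hs
  rw [← one_div]
  gcongr
  exact le_add_of_nonneg_right (sq_nonneg _)

lemma tendsto_sq_div_one_add_sq {φ : ℝ → ℝ}
    (hφ : Tendsto (fun s => φ s / s) atTop (𝓝 1)) :
    Tendsto (fun s => s ^ 2 / (1 + φ s ^ 2)) atTop (𝓝 1) := by
  have hlim : Tendsto (fun s => (s⁻¹ ^ 2 + (φ s / s) ^ 2)⁻¹) atTop (𝓝 1) := by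
    simpa using ((tendsto_inv_atTop_zero.pow 2).add (hφ.pow 2)).inv₀ (by norm_num)
  refine hlim.congr' ?_
  filter_upwards [eventually_gt_atTop 0] with s hs
  field_simp

/-- `φ` solves the perturbed Riccati equation `φ' = (1 + φ²) (1 + γ - (1 / s + δ) φ)` for all
sufficiently large `s`; the threshold is left implicit, as only the behaviour at infinity
matters. -/
def EventuallyRiccati (γ δ φ : ℝ → ℝ) : Prop :=
  ∀ᶠ s in atTop, HasDerivAt φ ((1 + φ s ^ 2) * (1 + γ s - (1 / s + δ s) * φ s)) s

namespace EventuallyRiccati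

variable {γ δ φ : ℝ → ℝ} {a b : ℝ}

lemma eventually_hasDerivAt_div_id (h : EventuallyRiccati γ δ φ) :
    ∀ᶠ s in atTop, HasDerivAt (fun s => φ s / s)
      (((1 + φ s ^ 2) * (1 + γ s - (1 + s * δ s) * (φ s / s)) - φ s / s) / s) s := by
  filter_upwards [h, eventually_gt_atTop 0] with s hφ hs
  refine (hφ.fun_div (hasDerivAt_id' s) hs.ne').congr_deriv ?_
  field_simp

lemma eventually_third_le_div_id (h : EventuallyRiccati γ δ φ) (hγ : Tendsto γ atTop (𝓝 0))
    (hδ : Tendsto (fun s => s * δ s) atTop (𝓝 0)) : ∀ᶠ s in atTop, 1 / 3 ≤ φ s / s := by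
  refine eventually_ge_of_deriv_ge (ρ := fun s => 1 / 6 * Real.log s) h.eventually_hasDerivAt_div_id
    ((eventually_ne_atTop 0).mono fun s hs => (Real.hasDerivAt_log hs).const_mul _)
    ((eventually_gt_atTop 0).mono fun s hs => by positivity)
    (Real.tendsto_log_atTop.const_mul_atTop (by norm_num)) ?_
  filter_upwards [eventually_gt_atTop 0,
    hγ.eventually_const_le (show (-1 / 12 : ℝ) < 0 by norm_num),
    hδ.eventually_const_le (show (-1 : ℝ) < 0 by norm_num),
    hδ.eventually_le_const (show (0 : ℝ) < 1 / 12 by norm_num)] with s hs hγs hδ_ge hδ_le hφs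
  have hdrift : 1 / 2 ≤ 1 + γ s - (1 + s * δ s) * (φ s / s) := by
    have : (1 + s * δ s) * (φ s / s) ≤ (1 + s * δ s) * (1 / 3) :=
      mul_le_mul_of_nonneg_left hφs (by linarith)
    linarith
  rw [← div_eq_mul_inv]
  gcongr
  nlinarith [sq_nonneg (φ s)]

lemma tendsto_atTop (h : EventuallyRiccati γ δ φ) (hγ : Tendsto γ atTop (𝓝 0))
    (hδ : Tendsto (fun s => s * δ s) atTop (𝓝 0)) : Tendsto φ atTop atTop := by
  refine tendsto_atTop_mono' atTop ?_
    (tendsto_id.const_mul_atTop (show (0 : ℝ) < 1 / 3 by norm_num))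
  filter_upwards [h.eventually_third_le_div_id hγ hδ, eventually_gt_atTop 0] with s hφs hs
  exact (le_div_iff₀ hs).1 hφs

theorem tendsto_div_id (h : EventuallyRiccati γ δ φ) (hγ : Tendsto γ atTop (𝓝 0))
    (hδ : Tendsto (fun s => s * δ s) atTop (𝓝 0)) :
    Tendsto (fun s => φ s / s) atTop (𝓝 1) := by
  have hδ_ge : ∀ᶠ s in atTop, -1 ≤ s * δ s := hδ.eventually_const_le (by norm_num)
  refine tendsto_of_relaxation_of_inv_le
    (A := fun s => (1 + φ s ^ 2) * (1 + s * δ s + (1 + φ s ^ 2)⁻¹) / s)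
    (g := fun s => (1 + γ s) / (1 + s * δ s + (1 + φ s ^ 2)⁻¹)) ?_ ?_ ?_
  · filter_upwards [h.eventually_hasDerivAt_div_id, hδ_ge] with s hφ hδs
    have hpos : 0 < 1 + s * δ s + (1 + φ s ^ 2)⁻¹ :=
      add_pos_of_nonneg_of_pos (by linarith) (by positivity)
    have hcancel := mul_div_cancel₀ (1 + γ s) hpos.ne'
    have hinv : (1 + φ s ^ 2) * (1 + φ s ^ 2)⁻¹ = 1 := mul_inv_cancel₀ (by positivity)
    refine hφ.congr_deriv ?_
    linear_combination -((1 + φ s ^ 2) / s) * hcancel + φ s / s / s * hinv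
  · filter_upwards [eventually_gt_atTop 0, hδ_ge] with s hs hδs
    have hsq : 0 < 1 + φ s ^ 2 := by positivity
    rw [← one_div, mul_add, mul_inv_cancel₀ hsq.ne']
    gcongr
    exact le_add_of_nonneg_left (mul_nonneg hsq.le (by linarith))
  · have hinv : Tendsto (fun s => (1 + φ s ^ 2)⁻¹) atTop (𝓝 0) :=
      (tendsto_atTop_add_const_left _ 1
        ((tendsto_pow_atTop two_ne_zero).comp (h.tendsto_atTop hγ hδ))).inv_tendsto_atTop
    simpa [Pi.div_def] using (hγ.const_add 1).div ((hδ.const_add 1).add hinv) (by norm_num)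

lemma eventually_hasDerivAt_mul_sub (h : EventuallyRiccati γ δ φ) :
    ∀ᶠ s in atTop, HasDerivAt (fun s => s * (φ s - s))
      ((1 + φ s ^ 2) / s * (s ^ 2 * γ s - s ^ 3 * δ s * (φ s / s)
        + (φ s / s - 2) * (s ^ 2 / (1 + φ s ^ 2)) - s * (φ s - s))) s := by
  filter_upwards [h, eventually_gt_atTop 0] with s hφ hs
  refine ((hasDerivAt_id' s).fun_mul (hφ.fun_sub (hasDerivAt_id' s))).congr_deriv ?_
  field_simp
  ring

theorem tendsto_mul_sub (h : EventuallyRiccati γ δ φ)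
    (hγ : Tendsto (fun s => s ^ 2 * γ s) atTop (𝓝 a))
    (hδ : Tendsto (fun s => s ^ 3 * δ s) atTop (𝓝 b)) :
    Tendsto (fun s => s * (φ s - s)) atTop (𝓝 (-(1 - a + b))) := by
  have hφ : Tendsto (fun s => φ s / s) atTop (𝓝 1) := h.tendsto_div_id
    (by simpa using tendsto_pow_mul_zero_of_lt (k := 0) two_pos hγ)
    (by simpa using tendsto_pow_mul_zero_of_lt (k := 1) (by norm_num) hδ)
  refine tendsto_of_relaxation_of_inv_le h.eventually_hasDerivAt_mul_sub
    (eventually_inv_le_one_add_sq_div φ) ?_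
  convert (hγ.sub (hδ.mul hφ)).add ((hφ.sub_const 2).mul (tendsto_sq_div_one_add_sq hφ)) using 2
  ring

-- With `w = s (φ - s)`, the third forcing term combines `1 + φ² + s φ - 2 s² = 1 + 3 w + (φ - s)²`
-- with the contribution `2 (w + 1)` of differentiating the prefactor `s²`.
lemma eventually_hasDerivAt_sq_mul_mul_sub_add_one (h : EventuallyRiccati γ δ φ) :
    ∀ᶠ s in atTop, HasDerivAt (fun s => s ^ 2 * (s * (φ s - s) + 1))
      ((1 + φ s ^ 2) / s * (s ^ 4 * γ s - s ^ 5 * δ s * (φ s / s)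
        + (3 + 5 * (s * (φ s - s)) + (φ s - s) ^ 2) * (s ^ 2 / (1 + φ s ^ 2))
        - s ^ 2 * (s * (φ s - s) + 1))) s := by
  filter_upwards [h.eventually_hasDerivAt_mul_sub, eventually_gt_atTop 0] with s hw hs
  refine ((hasDerivAt_pow 2 s).fun_mul (hw.add_const 1)).congr_deriv ?_
  field_simp
  ring

theorem tendsto_sq_mul_mul_sub_add_one (h : EventuallyRiccati γ δ φ)
    (hγ : Tendsto (fun s => s ^ 4 * γ s) atTop (𝓝 a))
    (hδ : Tendsto (fun s => s ^ 5 * δ s) atTop (𝓝 b)) :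
    Tendsto (fun s => s ^ 2 * (s * (φ s - s) + 1)) atTop (𝓝 (-(2 - a + b))) := by
  have hφ : Tendsto (fun s => φ s / s) atTop (𝓝 1) := h.tendsto_div_id
    (by simpa using tendsto_pow_mul_zero_of_lt (k := 0) four_pos hγ)
    (by simpa using tendsto_pow_mul_zero_of_lt (k := 1) (by norm_num) hδ)
  have hw : Tendsto (fun s => s * (φ s - s)) atTop (𝓝 (-1)) := by
    simpa using h.tendsto_mul_sub (tendsto_pow_mul_zero_of_lt (by norm_num) hγ)
      (tendsto_pow_mul_zero_of_lt (by norm_num) hδ)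
  have hsub : Tendsto (fun s => φ s - s) atTop (𝓝 0) := by
    refine (by simpa using tendsto_inv_atTop_zero.mul hw :
      Tendsto (fun s => s⁻¹ * (s * (φ s - s))) atTop (𝓝 0)).congr' ?_
    filter_upwards [eventually_ne_atTop 0] with s hs
    exact inv_mul_cancel_left₀ hs _
  refine tendsto_of_relaxation_of_inv_le h.eventually_hasDerivAt_sq_mul_mul_sub_add_one
    (eventually_inv_le_one_add_sq_div φ) ?_
  convert (hγ.sub (hδ.mul hφ)).add ((((hw.const_mul 5).const_add 3).add (hsub.pow 2)).mul
    (tendsto_sq_div_one_add_sq hφ)) using 2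
  ring

end EventuallyRiccati

lemma isLittleO_of_tendsto_sq_mul_mul_sub_add_one {φ : ℝ → ℝ} {c : ℝ}
    (h : Tendsto (fun s => s ^ 2 * (s * (φ s - s) + 1)) atTop (𝓝 (-c))) :
    (fun s => φ s - (s - 1 / s - c / s ^ 3)) =o[atTop] fun s => 1 / s ^ 3 := by
  refine (isLittleO_iff_tendsto' ?_).2 ?_
  · filter_upwards [eventually_gt_atTop 0] with s hs hzero
    exact absurd hzero (by positivity)
  · refine (by simpa using h.add_const c :
      Tendsto (fun s => s ^ 2 * (s * (φ s - s) + 1) + c) atTop (𝓝 0)).congr' ?_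
    filter_upwards [eventually_gt_atTop 0] with s hs
    field_simp
    ring

theorem riccati_second_order_asymptotics_general {γ δ φ : ℝ → ℝ} {a b : ℝ}
    (h : EventuallyRiccati γ δ φ)
    (hγ : Tendsto (fun s => s ^ 4 * γ s) atTop (𝓝 a))
    (hδ : Tendsto (fun s => s ^ 5 * δ s) atTop (𝓝 b)) :
    Tendsto (fun s => s ^ 2 * (s * (φ s - s) + 1)) atTop (𝓝 (-(2 - a + b))) ∧
      (fun s => φ s - (s - 1 / s - (2 - a + b) / s ^ 3)) =o[atTop] fun s => 1 / s ^ 3 := by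
  have hu := h.tendsto_sq_mul_mul_sub_add_one hγ hδ
  exact ⟨hu, isLittleO_of_tendsto_sq_mul_mul_sub_add_one hu⟩

/-- `s²(s(φ(s) − s) + 1) → −2` as `s → ∞`; in particular
`φ(s) = s − 1/s − 2/s³ + o(1/s³)`. -/
theorem riccati_second_order_asymptotics
    (s₀ C : ℝ) (hs₀ : 1 < s₀) (hC : 0 < C)
    (γ δ φ φ' : ℝ → ℝ)
    (hγ : Continuous γ) (hδ : Continuous δ)
    (hbound : ∀ s ∈ Ici s₀, |γ s| + |δ s| ≤ C / s ^ 10)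
    (hφ : ∀ s ∈ Ici s₀, HasDerivWithinAt φ (φ' s) (Ici s₀) s)
    (hφ' : ContinuousOn φ' (Ici s₀))
    (heq : ∀ s ∈ Ici s₀,
      φ' s = (1 + φ s ^ 2) * (1 + γ s - (1 / s + δ s) * φ s)) :
    Tendsto (fun s => s ^ 2 * (s * (φ s - s) + 1)) atTop (nhds (-2)) ∧
      (fun s => φ s - (s - 1 / s - 2 / s ^ 3)) =o[atTop] fun s => 1 / s ^ 3 := by
  have hriccati : EventuallyRiccati γ δ φ := by
    filter_upwards [eventually_gt_atTop s₀] with s hs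
    exact heq s hs.le ▸ (hφ s hs.le).hasDerivAt (Ici_mem_nhds hs)
  have hγ_decay : ∀ᶠ s in atTop, |γ s| ≤ C / s ^ 10 := (eventually_ge_atTop s₀).mono
    fun s hs => (le_add_of_nonneg_right (abs_nonneg _)).trans (hbound s hs)
  have hδ_decay : ∀ᶠ s in atTop, |δ s| ≤ C / s ^ 10 := (eventually_ge_atTop s₀).mono
    fun s hs => (le_add_of_nonneg_left (abs_nonneg _)).trans (hbound s hs)
  simpa using riccati_second_order_asymptotics_general hriccati
    (tendsto_pow_mul_zero_of_abs_le_div_pow (by norm_num) hγ_decay)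
    (tendsto_pow_mul_zero_of_abs_le_div_pow (by norm_num) hδ_decay)
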